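/- Let ω : A → ℂ be a linear functional on an associative algebra A with ω(1) = 1, and for an ordered tuple J of elements of A let ω^T(J) denote the truncated (connected) functionals, defined recursively by ω(J) = Σ over ordered partitions of J into nonempty ordered blocks of the product of ω^T over the blocks. Then for any elements A_0, A_1, …, A_n of A, the expectation of the iterated commutator satisfies ω([A_n,[…,[A_1,A_0]…]]) = Σ_{I ⊆ {1,…,n}} (−1)^{|I^c|} ω^T(⟨I decreasing⟩ ∪ {0} ∪ ⟨I^c increasing⟩), i.e. in the expansion of ω of the iterated commutator only fully connected truncated functions containing the index 0 survive; all disconnected contributions cancel in pairs. -/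

import Mathlib

/-- The iterated commutator `[A_n, [A_{n-1}, …, [A_1, A_0]…]]`. -/
def iterComm {R : Type*} [Ring R] (A : ℕ → R) : ℕ → R
  | 0 => A 0
  | n + 1 => A (n + 1) * iterComm A n - iterComm A n * A (n + 1)

/-- The ordered sub-tuple of the list `J` given by the positions in `S`
(taken in increasing order of position). -/
def select (J : List ℕ) (S : Finset ℕ) : List ℕ :=
  ((List.range J.length).filter fun i => decide (i ∈ S)).map fun i => J.getD i 0

/-- The ordered sub-tuple of the list `J` given by the positions *not* in `S`
(taken in increasing order of position). -/
def selectC (J : List ℕ) (S : Finset ℕ) : List ℕ :=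
  ((List.range J.length).filter fun i => decide (i ∉ S)).map fun i => J.getD i 0

/-- The sum of `F K K'` over all ways to split the tuple `J` into an ordered sub-tuple `K` and
its ordered complement `K'`. -/
def splitSum {M : Type*} [Add M] : List ℕ → (List ℕ → List ℕ → M) → M
  | [], F => F [] []
  | a :: J, F => splitSum J (fun K K' => F K (a :: K')) + splitSum J (fun K K' => F (a :: K) K')

/-- The difference of placing `k` in front of the left tuple and at the end of the right tuple. -/
def insertDiff {M : Type*} [Sub M] (k : ℕ) (F : List ℕ → List ℕ → M) (l r : List ℕ) : M :=
  F (k :: l) r - F l (r ++ [k])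

/-- The signed sum of `F ⟨I decreasing⟩ ⟨Iᶜ increasing⟩` over `I ⊆ {1, …, n}`, as an iterated
difference. -/
def iterDiff {M : Type*} [Sub M] : ℕ → (List ℕ → List ℕ → M) → M
  | 0, F => F [] []
  | n + 1, F => iterDiff n (insertDiff (n + 1) F)

section SplitSum

variable {M : Type*}

theorem splitSum_add [AddCommMonoid M] (J : List ℕ) (F G : List ℕ → List ℕ → M) :
    splitSum J (fun K K' => F K K' + G K K') = splitSum J F + splitSum J G := by
  induction J generalizing F G with
  | nil => rfl
  | cons a J ih =>
    simp only [splitSum, ih]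
    exact add_add_add_comm _ _ _ _

theorem splitSum_sub [AddCommGroup M] (J : List ℕ) (F G : List ℕ → List ℕ → M) :
    splitSum J (fun K K' => F K K' - G K K') = splitSum J F - splitSum J G := by
  rw [eq_sub_iff_add_eq, ← splitSum_add]
  simp

theorem splitSum_append_singleton [AddCommMonoid M] (J : List ℕ) (a : ℕ)
    (F : List ℕ → List ℕ → M) :
    splitSum (J ++ [a]) F =
      splitSum J (fun K K' => F K (K' ++ [a])) + splitSum J (fun K K' => F (K ++ [a]) K') := by
  induction J generalizing F with
  | nil => rfl
  | cons b J ih =>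
    simp only [List.cons_append, splitSum, ih]
    exact add_add_add_comm _ _ _ _

theorem sum_powerset_range_succ [AddCommMonoid M] (m : ℕ) (g : Finset ℕ → M) :
    ∑ S ∈ (Finset.range (m + 1)).powerset, g S =
      ∑ S ∈ (Finset.range m).powerset, g (S.image Nat.succ) +
        ∑ S ∈ (Finset.range m).powerset, g (insert 0 (S.image Nat.succ)) := by
  have h : Finset.range (m + 1) = insert 0 ((Finset.range m).image Nat.succ) := by
    ext i
    cases i <;> simp
  have hinj : Set.InjOn (Finset.image Nat.succ) ((Finset.range m).powerset : Set (Finset ℕ)) :=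
    (Finset.image_injective Nat.succ_injective).injOn
  rw [h, Finset.sum_powerset_insert (by simp), Finset.powerset_image,
    Finset.sum_image hinj, Finset.sum_image hinj]

theorem select_cons_image_succ (a : ℕ) (J : List ℕ) (S : Finset ℕ) :
    select (a :: J) (S.image Nat.succ) = select J S := by
  simp [select, List.range_succ_eq_map, List.filter_map, Function.comp_def]

theorem selectC_cons_image_succ (a : ℕ) (J : List ℕ) (S : Finset ℕ) :
    selectC (a :: J) (S.image Nat.succ) = a :: selectC J S := by
  simp [selectC, List.range_succ_eq_map, List.filter_map, Function.comp_def]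

theorem select_cons_insert_zero (a : ℕ) (J : List ℕ) (S : Finset ℕ) :
    select (a :: J) (insert 0 (S.image Nat.succ)) = a :: select J S := by
  simp [select, List.range_succ_eq_map, List.filter_map, Function.comp_def]

theorem selectC_cons_insert_zero (a : ℕ) (J : List ℕ) (S : Finset ℕ) :
    selectC (a :: J) (insert 0 (S.image Nat.succ)) = selectC J S := by
  simp [selectC, List.range_succ_eq_map, List.filter_map, Function.comp_def]

theorem sum_select_eq_splitSum [AddCommMonoid M] (J : List ℕ) (F : List ℕ → List ℕ → M) :
    ∑ S ∈ (Finset.range J.length).powerset, F (select J S) (selectC J S) = splitSum J F := by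
  induction J generalizing F with
  | nil => simp [splitSum, select, selectC]
  | cons a J ih =>
    simp only [List.length_cons, sum_powerset_range_succ, select_cons_image_succ,
      selectC_cons_image_succ, select_cons_insert_zero, selectC_cons_insert_zero, splitSum, ← ih]

theorem sum_select_filter_eq_splitSum [AddCommMonoid M] (l r : List ℕ) (a : ℕ)
    (F : List ℕ → List ℕ → M) :
    ∑ S ∈ (Finset.range (l ++ a :: r).length).powerset.filter (fun S => l.length ∈ S),
        F (select (l ++ a :: r) S) (selectC (l ++ a :: r) S) =
      splitSum l fun l₁ l₂ => splitSum r fun r₁ r₂ => F (l₁ ++ a :: r₁) (l₂ ++ r₂) := by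
  rw [Finset.sum_filter]
  induction l generalizing F with
  | nil =>
    simp only [List.nil_append, List.length_cons, List.length_nil, sum_powerset_range_succ,
      select_cons_insert_zero, selectC_cons_insert_zero, splitSum]
    simp [← sum_select_eq_splitSum]
  | cons b l ih =>
    simp only [List.cons_append, List.length_cons, sum_powerset_range_succ,
      select_cons_image_succ, selectC_cons_image_succ, select_cons_insert_zero,
      selectC_cons_insert_zero, splitSum]
    rw [← ih fun K K' => F K (b :: K'), ← ih fun K K' => F (b :: K) K']
    simp

theorem iterDiff_add [AddCommGroup M] (n : ℕ) (F G : List ℕ → List ℕ → M) :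
    iterDiff n (fun l r => F l r + G l r) = iterDiff n F + iterDiff n G := by
  induction n generalizing F G with
  | zero => rfl
  | succ n ih =>
    simp only [iterDiff, ← ih]
    congr 1
    funext l r
    exact add_sub_add_comm _ _ _ _

theorem iterDiff_sub [AddCommGroup M] (n : ℕ) (F G : List ℕ → List ℕ → M) :
    iterDiff n (fun l r => F l r - G l r) = iterDiff n F - iterDiff n G := by
  rw [eq_sub_iff_add_eq, ← iterDiff_add]
  simp

/-- The cancellation of disconnected terms: a product of a function of the selected entries and a
function `h` of the concatenated remaining entries contributes only when nothing remains. -/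
theorem iterDiff_splitSum_mul [Ring M] (n : ℕ) (F : List ℕ → List ℕ → M) (h : List ℕ → M) :
    iterDiff n (fun l r =>
        splitSum l fun l₁ l₂ => splitSum r fun r₁ r₂ => F l₁ r₁ * h (l₂ ++ r₂)) =
      iterDiff n F * h [] := by
  induction n generalizing F h with
  | zero => rfl
  | succ n ih =>
    have hstep : insertDiff (n + 1) (fun l r =>
          splitSum l fun l₁ l₂ => splitSum r fun r₁ r₂ => F l₁ r₁ * h (l₂ ++ r₂)) =
        fun l r =>
          (splitSum l fun l₁ l₂ => splitSum r fun r₁ r₂ =>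
            insertDiff (n + 1) F l₁ r₁ * h (l₂ ++ r₂)) +
          splitSum l fun l₁ l₂ => splitSum r fun r₁ r₂ =>
            F l₁ r₁ * (h ((n + 1) :: (l₂ ++ r₂)) - h (l₂ ++ r₂ ++ [n + 1])) := by
      funext l r
      simp only [insertDiff, splitSum, splitSum_append_singleton, splitSum_add, sub_mul, mul_sub,
        splitSum_sub, List.cons_append, List.append_assoc]
      abel
    rw [iterDiff, hstep, iterDiff_add, ih,
      ih F fun K => h ((n + 1) :: K) - h (K ++ [n + 1])]
    simp [iterDiff]

end SplitSum

theorem sort_insert_of_forall_lt (I : Finset ℕ) (k : ℕ) (hk : ∀ i ∈ I, i < k) :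
    (insert k I).sort (· ≤ ·) = I.sort (· ≤ ·) ++ [k] := by
  have hkI : k ∉ I := fun h => (hk k h).false
  refine List.Perm.eq_of_pairwise' (r := (· ≤ ·)) (Finset.pairwise_sort _ _) ?_ ?_
  · simp only [List.pairwise_append, Finset.pairwise_sort, List.pairwise_singleton,
      Finset.mem_sort, List.mem_singleton, true_and]
    rintro a ha b rfl
    exact (hk a ha).le
  · rw [← Multiset.coe_eq_coe, ← Multiset.coe_add, Finset.sort_eq, Finset.sort_eq,
      Finset.insert_val_of_notMem hkI, Multiset.coe_singleton, add_comm, Multiset.singleton_add]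

theorem sum_powerset_Icc_eq_iterDiff {M : Type*} [Ring M] (n : ℕ) (F : List ℕ → List ℕ → M) :
    ∑ I ∈ (Finset.Icc 1 n).powerset, (-1 : M) ^ ((Finset.Icc 1 n \ I).card) *
        F (I.sort (· ≤ ·)).reverse ((Finset.Icc 1 n \ I).sort (· ≤ ·)) = iterDiff n F := by
  induction n generalizing F with
  | zero => simp [iterDiff]
  | succ n ih =>
    have hn : n + 1 ∉ Finset.Icc 1 n := by simp
    rw [← Finset.insert_Icc_right_eq_Icc_add_one (by lia), Finset.sum_powerset_insert hn,
      iterDiff, ← ih, ← Finset.sum_add_distrib]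
    refine Finset.sum_congr rfl fun I hI => ?_
    rw [Finset.mem_powerset] at hI
    have hlt : ∀ i ∈ Finset.Icc 1 n, i < n + 1 := fun i hi => by
      rw [Finset.mem_Icc] at hi
      lia
    have hnI : n + 1 ∉ I := fun h => hn (hI h)
    rw [Finset.insert_sdiff_of_notMem _ hnI, Finset.insert_sdiff_insert,
      Finset.sdiff_insert_of_notMem hn, Finset.card_insert_of_notMem (by simp),
      sort_insert_of_forall_lt I _ fun i hi => hlt i (hI hi),
      sort_insert_of_forall_lt _ _ fun i hi => hlt i (Finset.sdiff_subset hi), insertDiff,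
      List.reverse_append, pow_succ, mul_sub]
    simp only [List.reverse_singleton, List.singleton_append]
    noncomm_ring

theorem map_iterComm_eq_iterDiff {R M : Type*} [Ring R] [AddCommGroup M] (φ : R →+ M)
    (A : ℕ → R) (n : ℕ) :
    φ (iterComm A n) = iterDiff n fun l r => φ (((l ++ 0 :: r).map A).prod) := by
  suffices h : ∀ L R' : R, φ (L * iterComm A n * R') =
      iterDiff n fun l r => φ (L * ((l ++ 0 :: r).map A).prod * R') by
    simpa using h 1 1
  induction n with
  | zero => simp [iterComm, iterDiff]
  | succ n ih =>
    intro L R'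
    have hstep : insertDiff (n + 1) (fun l r => φ (L * ((l ++ 0 :: r).map A).prod * R')) =
        fun l r => φ (L * A (n + 1) * ((l ++ 0 :: r).map A).prod * R') -
          φ (L * ((l ++ 0 :: r).map A).prod * (A (n + 1) * R')) := by
      funext l r
      simp [insertDiff, mul_assoc]
    rw [iterDiff, hstep, iterDiff_sub, ← ih, ← ih, ← map_sub, iterComm]
    noncomm_ring

theorem stmt_12 {R : Type*} [Ring R] [Algebra ℂ R]
    (ω : R →ₗ[ℂ] ℂ) (hω1 : ω 1 = 1)
    (A : ℕ → R) (ωT : List ℕ → ℂ)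
    -- recursive definition of the truncated (connected) functionals: for any tuple `J`
    -- and any distinguished position `p` in it,
    -- `ω(J) = ∑_{J₀ ⊆ J, p ∈ J₀} ωᵀ(J₀) ω(J ∖ J₀)` (order preserved in both factors)
    (hrec : ∀ (J : List ℕ) (p : ℕ), p < J.length →
      ω ((J.map A).prod) =
        ∑ S ∈ (Finset.range J.length).powerset.filter (fun S => p ∈ S),
          ωT (select J S) * ω (((selectC J S).map A).prod))
    (n : ℕ) :
    ω (iterComm A n) =
      ∑ I ∈ (Finset.Icc 1 n).powerset,
        (-1 : ℂ) ^ ((Finset.Icc 1 n \ I).card) *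
          ωT ((I.sort (· ≤ ·)).reverse ++ 0 :: ((Finset.Icc 1 n \ I).sort (· ≤ ·))) := by
  have hsplit : (fun l r : List ℕ => ω (((l ++ 0 :: r).map A).prod)) = fun l r =>
      splitSum l fun l₁ l₂ => splitSum r fun r₁ r₂ =>
        ωT (l₁ ++ 0 :: r₁) * ω (((l₂ ++ r₂).map A).prod) := by
    funext l r
    rw [hrec (l ++ 0 :: r) l.length (by simp)]
    exact sum_select_filter_eq_splitSum l r 0 fun K K' => ωT K * ω ((K'.map A).prod)
  have hcomm := map_iterComm_eq_iterDiff ω.toAddMonoidHom A n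
  simp only [LinearMap.toAddMonoidHom_coe] at hcomm
  rw [hcomm, hsplit, iterDiff_splitSum_mul n (fun l r => ωT (l ++ 0 :: r))
    fun K => ω ((K.map A).prod), sum_powerset_Icc_eq_iterDiff n fun l r => ωT (l ++ 0 :: r)]
  simp [hω1]
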